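/- arXiv:1605.08395 — 2 statements merged into one kernel-verified Lean document; each statement's English description precedes it below -/
import Mathlib

section
/- Let q be a nonzero Gaussian integer and define Φ^ε_q(x) = Φ^ε(qx) (complex multiplication, identifying R^2 with C). Then for every ℓ ∈ Z^2, the Fourier coefficient Φ^ε_q-hat(ℓ) equals φ-hat(ε ℓ/conj(q)) if conj(ℓ)/q ∈ Z^2 (i.e. q divides conj(ℓ) in Z[i]), and equals 0 otherwise. -/
open MeasureTheory Complex GaussianInt

noncomputable def gnorm (q : GaussianInt) : ℝ := max |(q.re : ℝ)| |(q.im : ℝ)|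
noncomputable def snorm2 (z : ℂ) : ℝ := max |z.re| |z.im|
noncomputable def ec (t : ℝ) : ℂ := Complex.exp (-2 * Real.pi * Complex.I * t)
def inn (ξ x : ℂ) : ℝ := ξ.re * x.re + ξ.im * x.im
def unitSquare : Set ℂ := {z : ℂ | z.re ∈ Set.Icc (0:ℝ) 1 ∧ z.im ∈ Set.Icc (0:ℝ) 1}
noncomputable def fcoeff (f : ℂ → ℂ) (ξ : ℂ) : ℂ := ∫ x in unitSquare, ec (inn ξ x) * f x
noncomputable def ftr (f : ℂ → ℂ) (ξ : ℂ) : ℂ := ∫ x : ℂ, ec (inn ξ x) * f x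
noncomputable def Phi (φ : ℂ → ℝ) (ε : ℝ) (x : ℂ) : ℝ :=
  ∑' r : GaussianInt, ε⁻¹ ^ 2 * φ (ε⁻¹ • (x - toComplex r))
noncomputable def Z2 (M : ℝ) : Set GaussianInt := {q | M / 2 < gnorm q ∧ gnorm q ≤ M}
noncomputable def FM (φ : ℂ → ℝ) (τ M : ℝ) (x : ℂ) : ℝ :=
  ((Z2 M).ncard : ℝ)⁻¹ * ∑' q : (Z2 M), Phi φ (M ^ (-τ) / 2) (toComplex q.1 * x)
noncomputable def PM (M : ℝ) : Set GaussianInt := {q | Prime q ∧ M / 2 < gnorm q ∧ gnorm q ≤ M}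
noncomputable def FMP (φ : ℂ → ℝ) (τ M : ℝ) (x : ℂ) : ℝ :=
  ((PM M).ncard : ℝ)⁻¹ * ∑' q : (PM M), Phi φ (M ^ (-τ) / 2) (toComplex q.1 * x)
noncomputable def mhat (μ : Measure ℂ) (ξ : ℂ) : ℂ := ∫ x, ec (inn ξ x) ∂μ

/-!
The function `x ↦ Φ^ε (q x)` is invariant under `q⁻¹ ℤ[i]`, because `Φ^ε` is invariant under
`ℤ[i]`. Translating by `s / q` multiplies the coefficient at `ℓ` by the character value
`e(⟨ℓ, s / q⟩)`, so a nonzero coefficient forces `⟨ℓ, s / q⟩ ∈ ℤ` for every `s`, which means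
`q ∣ conj ℓ`. If on the other hand `ℓ = conj q * k`, then `⟨ℓ, x⟩ = ⟨k, q x⟩`. As `x ↦ q x`
induces a surjective endomorphism of the torus, it preserves Haar measure, and the coefficient is
the one of `Φ^ε` at `k`. Unfolding the sum over `ℤ[i]` turns this into an integral over the plane,
and rescaling by `ε` gives the Fourier transform of `φ` at `ε k = ε ℓ / conj q`.
-/

open Filter
open scoped Pointwise ENNReal ComplexConjugate

section Unfolding

variable {α E : Type*} [MeasurableSpace α] {μ : Measure α} [NormedAddCommGroup E]

lemma integrable_tsum [CompleteSpace E] {ι : Type*} [Countable ι] {f : ι → α → E}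
    (hf : ∀ i, AEStronglyMeasurable (f i) μ) (hf' : ∑' i, ∫⁻ x, ‖f i x‖ₑ ∂μ ≠ ∞) :
    Integrable (fun x => ∑' i, f i x) μ := by
  have h_enorm : ∀ i, AEMeasurable (fun x => ‖f i x‖ₑ) μ := fun i => (hf i).enorm
  rw [← lintegral_tsum h_enorm] at hf'
  have h_summable : ∀ᵐ x ∂μ, Summable fun i => f i x := by
    filter_upwards [ae_lt_top' (.tsum h_enorm) hf'] with x hx
    exact .of_enorm hx.ne
  refine ⟨aestronglyMeasurable_of_tendsto_ae atTop
    (fun s => Finset.aestronglyMeasurable_fun_sum s fun i _ => hf i)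
    (h_summable.mono fun x hx => hx.hasSum), ?_⟩
  exact (lintegral_mono fun x => enorm_tsum_le_tsum_enorm).trans_lt hf'.lt_top

variable {Γ : Type*} [AddGroup Γ] [Countable Γ] [AddAction Γ α] [MeasurableConstVAdd Γ α]
  [VAddInvariantMeasure Γ α μ] {D : Set α} {f : α → E}

lemma tsum_setLIntegral_enorm_vadd_ne_top (hD : IsAddFundamentalDomain Γ D μ)
    (hf : Integrable f μ) : ∑' g : Γ, ∫⁻ x in D, ‖f (g +ᵥ x)‖ₑ ∂μ ≠ ∞ := by
  rw [← hD.lintegral_eq_tsum'' (‖f ·‖ₑ)]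
  exact hf.2.ne

lemma integrableOn_tsum_vadd [CompleteSpace E] (hD : IsAddFundamentalDomain Γ D μ)
    (hf : Integrable f μ) : IntegrableOn (fun x => ∑' g : Γ, f (g +ᵥ x)) D μ :=
  integrable_tsum (fun g => (hf.1.comp_measurePreserving (measurePreserving_vadd g μ)).restrict)
    (tsum_setLIntegral_enorm_vadd_ne_top hD hf)

lemma setIntegral_tsum_vadd [NormedSpace ℝ E] (hD : IsAddFundamentalDomain Γ D μ)
    (hf : Integrable f μ) :
    ∫ x in D, ∑' g : Γ, f (g +ᵥ x) ∂μ = ∫ x, f x ∂μ := by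
  rw [hD.integral_eq_tsum'' f hf]
  exact integral_tsum
    (fun g => (hf.1.comp_measurePreserving (measurePreserving_vadd g μ)).restrict)
    (tsum_setLIntegral_enorm_vadd_ne_top hD hf)

end Unfolding

section InvariantFunctions

variable {G E : Type*} [AddCommGroup G] [MeasurableSpace G] [MeasurableAdd₂ G] {L : AddSubgroup G}
  [Countable L] {μ : Measure G} [μ.IsAddLeftInvariant] {D : Set G} [NormedAddCommGroup E]
  {F : G → E}

lemma setIntegral_add_left_of_vadd_invariant [NormedSpace ℝ E] (hD : IsAddFundamentalDomain L D μ)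
    (hF : ∀ (r : L) x, F (r +ᵥ x) = F x) (t : G) :
    ∫ x in D, F (t + x) ∂μ = ∫ x in D, F x ∂μ := by
  rw [hD.setIntegral_eq (hD.vadd_of_comm t) hF]
  exact ((measurePreserving_add_left μ t).setIntegral_image_emb
    (measurableEmbedding_addLeft t) F D).symm

lemma integrableOn_add_left_of_vadd_invariant (hD : IsAddFundamentalDomain L D μ)
    (hF : ∀ (r : L) x, F (r +ᵥ x) = F x) (hFD : IntegrableOn F D μ) (t : G) :
    IntegrableOn (fun x => F (t + x)) D μ :=
  ((measurePreserving_add_left μ t).integrableOn_image (measurableEmbedding_addLeft t)).1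
    ((hD.integrableOn_iff (hD.vadd_of_comm t) hF).1 hFD)

lemma aestronglyMeasurable_of_restrict_of_vadd_invariant (hD : IsAddFundamentalDomain L D μ)
    (hF : ∀ (r : L) x, F (r +ᵥ x) = F x) (hFD : AEStronglyMeasurable F (μ.restrict D)) :
    AEStronglyMeasurable F μ := by
  rw [← hD.sum_restrict]
  exact .sum_measure fun r => (hD.aestronglyMeasurable_on_iff (hD.vadd_of_comm r) hF).1 hFD

variable [SFinite μ]

lemma integrable_prod_comp_add_of_vadd_invariant (hD : IsAddFundamentalDomain L D μ)
    (hμD : μ D ≠ ∞) (hF : ∀ (r : L) x, F (r +ᵥ x) = F x) (hFD : IntegrableOn F D μ) {A : G → G}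
    (hA : Measurable A) :
    Integrable (fun p : G × G => F (A p.1 + p.2)) ((μ.restrict D).prod (μ.restrict D)) := by
  have h_shear : MeasurePreserving (fun p : G × G => (p.1, A p.1 + p.2)) (μ.prod μ) (μ.prod μ) :=
    (MeasurePreserving.id μ).skew_product (g := fun x y => A x + y) (by fun_prop)
      (.of_forall fun x => map_add_left_eq_self μ (A x))
  have h_meas : AEStronglyMeasurable (fun p : G × G => F (A p.1 + p.2)) (μ.prod μ) :=
    (aestronglyMeasurable_of_restrict_of_vadd_invariant hD hF hFD.1).comp_quasiMeasurePreserving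
      (Measure.quasiMeasurePreserving_snd.comp h_shear.quasiMeasurePreserving)
  have : IsFiniteMeasure (μ.restrict D) := isFiniteMeasure_restrict.2 hμD
  have h_norm (x : G) : ∫ y in D, ‖F (A x + y)‖ ∂μ = ∫ y in D, ‖F y‖ ∂μ :=
    setIntegral_add_left_of_vadd_invariant hD (F := (‖F ·‖)) (fun r x => by rw [hF]) (A x)
  rw [integrable_prod_iff (by rw [Measure.prod_restrict]; exact h_meas.restrict)]
  refine ⟨.of_forall fun x => integrableOn_add_left_of_vadd_invariant hD hF hFD (A x), ?_⟩
  simp only [h_norm, integrable_const]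

/- Averaging idea: `∫ x in D, F (A x + y)` does not depend on `y`, because `y = A s` and `F ∘ A` is
`L`-invariant; exchanging the order of integration instead translates `F` by `A x`. -/
theorem setIntegral_comp_surjective_of_vadd_invariant [NormedSpace ℝ E] [CompleteSpace E]
    (hD : IsAddFundamentalDomain L D μ) (hμ : μ ≠ 0) (hμD : μ D ≠ ∞)
    (hF : ∀ (r : L) x, F (r +ᵥ x) = F x) (hFD : IntegrableOn F D μ) {A : G →+ G}
    (hA : Measurable A) (hA_surj : Function.Surjective A) (hAL : L ≤ L.comap A) :
    ∫ x in D, F (A x) ∂μ = ∫ x in D, F x ∂μ := by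
  have h_inner (y : G) : ∫ x in D, F (A x + y) ∂μ = ∫ x in D, F (A x) ∂μ := by
    obtain ⟨s, rfl⟩ := hA_surj y
    have hFA (r : L) (x : G) : F (A (r +ᵥ x)) = F (A x) := by
      simpa [AddSubgroup.vadd_def] using hF ⟨A r, hAL r.2⟩ (A x)
    simpa [add_comm] using setIntegral_add_left_of_vadd_invariant hD (F := F ∘ A) hFA s
  have h_average : μ.real D • ∫ x in D, F (A x) ∂μ = μ.real D • ∫ x in D, F x ∂μ := by
    calc μ.real D • ∫ x in D, F (A x) ∂μ
        = ∫ y in D, ∫ x in D, F (A x + y) ∂μ ∂μ := by simp [h_inner]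
      _ = ∫ x in D, ∫ y in D, F (A x + y) ∂μ ∂μ :=
        (integral_integral_swap
          (integrable_prod_comp_add_of_vadd_invariant hD hμD hF hFD hA)).symm
      _ = μ.real D • ∫ x in D, F x ∂μ := by
        simp [setIntegral_add_left_of_vadd_invariant hD hF]
  exact smul_right_injective E (ENNReal.toReal_ne_zero.2 ⟨hD.measure_ne_zero hμ, hμD⟩) h_average

end InvariantFunctions

section Characters

lemma ec_add (s t : ℝ) : ec (s + t) = ec s * ec t := by
  simp only [ec, ofReal_add, mul_add, exp_add]

lemma norm_ec (t : ℝ) : ‖ec t‖ = 1 := by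
  simpa [ec, mul_right_comm] using norm_exp_ofReal_mul_I (-2 * Real.pi * t)

lemma ec_eq_one_iff {t : ℝ} : ec t = 1 ↔ ∃ n : ℤ, t = n := by
  have h_neg : ec t = (exp (t * (2 * Real.pi * I)))⁻¹ := by
    rw [ec, ← exp_neg]
    ring_nf
  rw [h_neg, inv_eq_one, exp_eq_one_iff]
  refine exists_congr fun n => ?_
  rw [mul_left_inj' two_pi_I_ne_zero]
  norm_cast

lemma inn_eq_re_conj_mul (ξ x : ℂ) : inn ξ x = (conj ξ * x).re := by
  simp [inn]

lemma inn_add_right (ξ x y : ℂ) : inn ξ (x + y) = inn ξ x + inn ξ y := by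
  simp only [inn_eq_re_conj_mul, mul_add, add_re]

lemma inn_conj_mul (q ξ x : ℂ) : inn (conj q * ξ) x = inn ξ (q * x) := by
  rw [inn_eq_re_conj_mul, inn_eq_re_conj_mul, map_mul, conj_conj, mul_left_comm, mul_assoc]

lemma inn_smul_smul_inv {a : ℝ} (ha : a ≠ 0) (ξ x : ℂ) : inn (a • ξ) (a⁻¹ • x) = inn ξ x := by
  simp only [inn, smul_re, smul_im, smul_eq_mul]
  field_simp

lemma continuous_ec_inn (ξ : ℂ) : Continuous fun x => ec (inn ξ x) := by
  unfold ec inn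
  fun_prop

lemma integrable_ec_inn_mul {μ : Measure ℂ} {f : ℂ → ℂ} (hf : Integrable f μ) (ξ : ℂ) :
    Integrable (fun x => ec (inn ξ x) * f x) μ :=
  hf.bdd_mul (continuous_ec_inn ξ).aestronglyMeasurable (.of_forall fun _ => (norm_ec _).le)

/- With `w = conj ℓ / q` the hypothesis says `Re (w s) ∈ ℤ` for all `s ∈ ℤ[i]`; the cases `s = 1`
and `s = i` already give `w ∈ ℤ[i]`. -/
lemma dvd_star_of_forall_inn_div {q ℓ : GaussianInt} (hq : q ≠ 0)
    (h : ∀ s : GaussianInt, ∃ n : ℤ, inn (toComplex ℓ) (toComplex s / toComplex q) = n) :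
    q ∣ star ℓ := by
  have hq' : toComplex q ≠ 0 := toComplex_eq_zero.not.2 hq
  have h_re (s : GaussianInt) : inn (toComplex ℓ) (toComplex s / toComplex q) =
      (toComplex (star ℓ) / toComplex q * toComplex s).re := by
    rw [inn_eq_re_conj_mul, toComplex_star, mul_div_assoc', div_mul_eq_mul_div]
  obtain ⟨a, ha⟩ := h 1
  obtain ⟨b, hb⟩ := h ⟨0, 1⟩
  rw [h_re] at ha hb
  refine ⟨⟨a, -b⟩, toComplex_injective ?_⟩
  rw [toComplex_mul, mul_comm, ← div_eq_iff hq']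
  apply Complex.ext
  · simpa using ha
  · simpa [toComplex_def', neg_eq_iff_eq_neg] using hb

end Characters

section UnitCell

/-- The lattice `ℤ[i] ⊆ ℂ`, acting on `ℂ` by translations. -/
def gaussianLattice : AddSubgroup ℂ := toComplex.toAddMonoidHom.range

/-- The Gaussian integers as an enumeration of the points of `gaussianLattice`. -/
noncomputable def gaussianLatticeEquiv : GaussianInt ≃+ gaussianLattice :=
  AddMonoidHom.ofInjective (f := toComplex.toAddMonoidHom) toComplex_injective

lemma gaussianLatticeEquiv_vadd (r : GaussianInt) (x : ℂ) :
    gaussianLatticeEquiv r +ᵥ x = toComplex r + x := rfl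

instance : Countable gaussianLattice := by
  have h_inj : Function.Injective fun r : GaussianInt => (r.re, r.im) := fun r s h =>
    Zsqrtd.ext (congrArg Prod.fst h) (congrArg Prod.snd h)
  have := h_inj.countable
  exact gaussianLatticeEquiv.symm.injective.countable

/-- The half-open unit square. Unlike `unitSquare`, it contains exactly one point of every coset
of `gaussianLattice`. -/
def unitCell : Set ℂ := Set.Ico 0 1 ×ℂ Set.Ico 0 1

lemma measurableSet_unitCell : MeasurableSet unitCell :=
  (measurable_re measurableSet_Ico).inter (measurable_im measurableSet_Ico)

lemma volume_unitCell_ne_top : volume unitCell ≠ ∞ :=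
  ((Metric.isBounded_Ico 0 1).reProdIm (Metric.isBounded_Ico 0 1)).measure_lt_top.ne

lemma unitSquare_ae_eq_unitCell : unitSquare =ᵐ[volume] unitCell :=
  volume_preserving_equiv_real_prod.quasiMeasurePreserving.preimage_ae_eq
    (s := Set.Icc 0 1 ×ˢ Set.Icc 0 1) (t := Set.Ico 0 1 ×ˢ Set.Ico 0 1)
    (Measure.set_prod_ae_eq Ico_ae_eq_Icc.symm Ico_ae_eq_Icc.symm)

lemma toComplex_add_mem_unitCell_iff {r : GaussianInt} {x : ℂ} :
    toComplex r + x ∈ unitCell ↔ r = ⟨-⌊x.re⌋, -⌊x.im⌋⟩ := by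
  have h_Ico (n : ℤ) (t : ℝ) : (n : ℝ) + t ∈ Set.Ico 0 1 ↔ n = -⌊t⌋ := by
    rw [eq_neg_iff_add_eq_zero, ← Int.floor_intCast_add, Int.floor_eq_zero_iff]
  simp only [unitCell, mem_reProdIm, add_re, add_im, ← GaussianInt.intCast_re,
    ← GaussianInt.intCast_im, h_Ico, Zsqrtd.ext_iff]

lemma isAddFundamentalDomain_unitCell : IsAddFundamentalDomain gaussianLattice unitCell := by
  refine .mk' measurableSet_unitCell.nullMeasurableSet fun x => ?_
  rw [← gaussianLatticeEquiv.toEquiv.existsUnique_congr_right]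
  simpa only [AddEquiv.toEquiv_eq_coe, AddEquiv.coe_toEquiv, gaussianLatticeEquiv_vadd,
    toComplex_add_mem_unitCell_iff] using existsUnique_eq

lemma fcoeff_eq_setIntegral_unitCell (f : ℂ → ℂ) (ξ : ℂ) :
    fcoeff f ξ = ∫ x in unitCell, ec (inn ξ x) * f x :=
  setIntegral_congr_set unitSquare_ae_eq_unitCell

end UnitCell

section PeriodicFunctions

/-- `ℤ²`-periodicity of a function on the plane, with `ℤ²` realised as the Gaussian integers. -/
def IsGaussianPeriodic {β : Type*} (F : ℂ → β) : Prop :=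
  ∀ (r : GaussianInt) (x : ℂ), F (toComplex r + x) = F x

namespace IsGaussianPeriodic

lemma vadd {β : Type*} {F : ℂ → β} (hF : IsGaussianPeriodic F) (r : gaussianLattice) (x : ℂ) :
    F (r +ᵥ x) = F x := by
  obtain ⟨s, rfl⟩ := gaussianLatticeEquiv.surjective r
  exact hF s x

lemma comp_toComplex_mul {β : Type*} {F : ℂ → β} (hF : IsGaussianPeriodic F) (q : GaussianInt) :
    IsGaussianPeriodic fun x => F (toComplex q * x) := fun r x => by
  simp only [mul_add, ← toComplex_mul, hF (q * r)]

variable {F : ℂ → ℂ}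

lemma ec_inn_mul (hF : IsGaussianPeriodic F) (k : GaussianInt) :
    IsGaussianPeriodic fun x => ec (inn (toComplex k) x) * F x := fun r x => by
  have h_one : ec (inn (toComplex k) (toComplex r)) = 1 :=
    ec_eq_one_iff.2 ⟨k.re * r.re + k.im * r.im, by simp [inn]⟩
  simp only [inn_add_right, ec_add, h_one, one_mul, hF r x]

lemma ec_mul_fcoeff_comp_add_left (hF : IsGaussianPeriodic F) (k : GaussianInt) (t : ℂ) :
    ec (inn (toComplex k) t) * fcoeff (fun x => F (t + x)) (toComplex k) =
      fcoeff F (toComplex k) := by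
  simp only [fcoeff_eq_setIntegral_unitCell, ← integral_const_mul, ← mul_assoc, ← ec_add,
    ← inn_add_right]
  exact setIntegral_add_left_of_vadd_invariant isAddFundamentalDomain_unitCell
    (F := fun x => ec (inn (toComplex k) x) * F x) (hF.ec_inn_mul k).vadd t

lemma setIntegral_unitCell_comp_toComplex_mul (hF : IsGaussianPeriodic F)
    (hF_int : IntegrableOn F unitCell) {q : GaussianInt} (hq : q ≠ 0) :
    ∫ x in unitCell, F (toComplex q * x) = ∫ x in unitCell, F x := by
  refine setIntegral_comp_surjective_of_vadd_invariant isAddFundamentalDomain_unitCell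
    (NeZero.ne volume) volume_unitCell_ne_top hF.vadd hF_int
    (A := AddMonoidHom.mulLeft (toComplex q)) (measurable_const_mul _)
    (mul_left_surjective₀ (toComplex_eq_zero.not.2 hq)) ?_
  rintro _ ⟨r, rfl⟩
  exact ⟨q * r, toComplex_mul q r⟩

theorem fcoeff_comp_toComplex_mul_conj_mul (hF : IsGaussianPeriodic F)
    (hF_int : IntegrableOn F unitCell) {q : GaussianInt} (hq : q ≠ 0) (k : GaussianInt) :
    fcoeff (fun x => F (toComplex q * x)) (conj (toComplex q) * toComplex k) =
      fcoeff F (toComplex k) := by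
  simp only [fcoeff_eq_setIntegral_unitCell, inn_conj_mul]
  exact (hF.ec_inn_mul k).setIntegral_unitCell_comp_toComplex_mul
    (integrable_ec_inn_mul hF_int _) hq

theorem fcoeff_comp_toComplex_mul_eq_zero (hF : IsGaussianPeriodic F) {q ℓ : GaussianInt}
    (hq : q ≠ 0) (hqℓ : ¬ q ∣ star ℓ) :
    fcoeff (fun x => F (toComplex q * x)) (toComplex ℓ) = 0 := by
  have hq' : toComplex q ≠ 0 := toComplex_eq_zero.not.2 hq
  by_contra h_ne
  refine hqℓ (dvd_star_of_forall_inn_div hq fun s => ec_eq_one_iff.1 ?_)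
  have h_translate := (hF.comp_toComplex_mul q).ec_mul_fcoeff_comp_add_left ℓ
    (toComplex s / toComplex q)
  simp only [mul_add, mul_div_cancel₀ _ hq', hF s] at h_translate
  exact (mul_eq_right₀ h_ne).1 h_translate

end IsGaussianPeriodic

end PeriodicFunctions

section Periodization

/-- The `ℤ²`-periodization `x ↦ ∑_r g (x - r)`. Where the series diverges its value is `0`; for
integrable `g` this happens only on a null set. -/
noncomputable def periodize (g : ℂ → ℂ) (x : ℂ) : ℂ := ∑' r : GaussianInt, g (x - toComplex r)

/-- The dilate `x ↦ ε⁻² f (ε⁻¹ x)`, normalised to preserve integrals over the plane. -/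
noncomputable def dilate (ε : ℝ) (f : ℂ → ℂ) (x : ℂ) : ℂ := (ε : ℂ)⁻¹ ^ 2 * f (ε⁻¹ • x)

lemma ofReal_Phi (φ : ℂ → ℝ) (ε : ℝ) (x : ℂ) :
    (Phi φ ε x : ℂ) = periodize (dilate ε fun y => (φ y : ℂ)) x := by
  simp only [Phi, periodize, dilate, ofReal_tsum, ofReal_mul, ofReal_pow, ofReal_inv]

lemma periodize_eq_tsum_vadd (g : ℂ → ℂ) (x : ℂ) :
    periodize g x = ∑' r : gaussianLattice, g (r +ᵥ x) := by
  rw [← ((Equiv.neg GaussianInt).trans gaussianLatticeEquiv.toEquiv).tsum_eq]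
  refine tsum_congr fun r => congrArg g ?_
  change x - toComplex r = gaussianLatticeEquiv (-r) +ᵥ x
  rw [gaussianLatticeEquiv_vadd, toComplex_neg, neg_add_eq_sub]

lemma isGaussianPeriodic_periodize (g : ℂ → ℂ) : IsGaussianPeriodic (periodize g) := fun s x => by
  unfold periodize
  rw [← (Equiv.addLeft s).tsum_eq]
  simp

variable {g : ℂ → ℂ}

lemma integrableOn_periodize (hg : Integrable g) : IntegrableOn (periodize g) unitCell := by
  simpa only [funext (periodize_eq_tsum_vadd g)] using
    integrableOn_tsum_vadd isAddFundamentalDomain_unitCell hg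

theorem fcoeff_periodize (hg : Integrable g) (k : GaussianInt) :
    fcoeff (periodize g) (toComplex k) = ftr g (toComplex k) := by
  have h_one : IsGaussianPeriodic fun _ : ℂ => (1 : ℂ) := fun _ _ => rfl
  have h_char (r : gaussianLattice) (x : ℂ) :
      ec (inn (toComplex k) (r +ᵥ x)) = ec (inn (toComplex k) x) := by
    simpa only [mul_one] using (h_one.ec_inn_mul k).vadd r x
  calc fcoeff (periodize g) (toComplex k)
      = ∫ x in unitCell, ∑' r : gaussianLattice,
          ec (inn (toComplex k) (r +ᵥ x)) * g (r +ᵥ x) := by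
        simp only [fcoeff_eq_setIntegral_unitCell, periodize_eq_tsum_vadd, h_char, tsum_mul_left]
    _ = ftr g (toComplex k) :=
        setIntegral_tsum_vadd isAddFundamentalDomain_unitCell (integrable_ec_inn_mul hg _)

variable {ε : ℝ}

lemma integrable_dilate (hg : Integrable g) (hε : ε ≠ 0) : Integrable (dilate ε g) :=
  (hg.comp_smul (inv_ne_zero hε)).const_mul _

lemma ftr_dilate (g : ℂ → ℂ) (hε : ε ≠ 0) (ξ : ℂ) : ftr (dilate ε g) ξ = ftr g (ε • ξ) := by
  have hε' : (ε : ℂ) ≠ 0 := ofReal_ne_zero.2 hε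
  calc ftr (dilate ε g) ξ
      = (ε : ℂ)⁻¹ ^ 2 * ∫ x : ℂ, ec (inn (ε • ξ) (ε⁻¹ • x)) * g (ε⁻¹ • x) := by
        simp only [ftr, dilate, inn_smul_smul_inv hε, mul_left_comm (ec _), integral_const_mul]
    _ = (ε : ℂ)⁻¹ ^ 2 * (|ε ^ 2| • ftr g (ε • ξ)) := by
        rw [Measure.integral_comp_inv_smul volume (fun y => ec (inn (ε • ξ) y) * g y),
          finrank_real_complex, ftr]
    _ = ftr g (ε • ξ) := by
        rw [abs_sq, real_smul, ofReal_pow]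
        field_simp

end Periodization

lemma isCompact_setOf_snorm2_le (R : ℝ) : IsCompact {z : ℂ | snorm2 z ≤ R} := by
  have h_square : {z : ℂ | snorm2 z ≤ R} = Set.Icc (-R) R ×ℂ Set.Icc (-R) R := by
    ext z
    simp only [snorm2, Set.mem_ofPred_eq, max_le_iff, abs_le, mem_reProdIm, Set.mem_Icc]
  rw [h_square]
  exact isCompact_Icc.reProdIm isCompact_Icc

theorem stmt3_general {φ : ℂ → ℝ} (hφ : Integrable φ) {ε : ℝ} (hε : ε ≠ 0)
    {q : GaussianInt} (hq : q ≠ 0) (ℓ : GaussianInt) :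
    (q ∣ star ℓ →
      fcoeff (fun x => (Phi φ ε (toComplex q * x) : ℂ)) (toComplex ℓ) =
        ftr (fun x => (φ x : ℂ)) (ε • (toComplex ℓ / conj (toComplex q)))) ∧
    (¬ q ∣ star ℓ →
      fcoeff (fun x => (Phi φ ε (toComplex q * x) : ℂ)) (toComplex ℓ) = 0) := by
  have h_dilate : Integrable (dilate ε fun y => (φ y : ℂ)) := integrable_dilate hφ.ofReal hε
  have h_periodic := isGaussianPeriodic_periodize (dilate ε fun y => (φ y : ℂ))
  simp only [ofReal_Phi]
  refine ⟨?_, h_periodic.fcoeff_comp_toComplex_mul_eq_zero hq⟩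
  rintro ⟨k, hk⟩
  have hq' : conj (toComplex q) ≠ 0 := by simpa using hq
  have hℓ : toComplex ℓ = conj (toComplex q) * toComplex (star k) := by
    rw [← star_star ℓ, hk, toComplex_star, toComplex_mul, map_mul, toComplex_star]
  rw [hℓ, mul_div_cancel_left₀ _ hq',
    h_periodic.fcoeff_comp_toComplex_mul_conj_mul (integrableOn_periodize h_dilate) hq,
    fcoeff_periodize h_dilate, ftr_dilate _ hε]

theorem stmt3 (K : ℕ) (φ : ℂ → ℝ) (hφ : ContDiff ℝ K φ) (hφpos : ∀ x, 0 ≤ φ x)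
    (hφsupp : Function.support φ ⊆ {z : ℂ | snorm2 z ≤ 1})
    (hφint : ∫ x : ℂ, φ x = 1) (ε : ℝ) (hε : 0 < ε)
    (q ℓ : GaussianInt) (hq : q ≠ 0) :
    (q ∣ star ℓ →
      fcoeff (fun x => (Phi φ ε (toComplex q * x) : ℂ)) (toComplex ℓ) =
        ftr (fun x => (φ x : ℂ)) (ε • (toComplex ℓ / (starRingEnd ℂ) (toComplex q)))) ∧
    (¬ q ∣ star ℓ →
      fcoeff (fun x => (Phi φ ε (toComplex q * x) : ℂ)) (toComplex ℓ) = 0) :=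
  stmt3_general (hφ.continuous.integrable_of_hasCompactSupport
    (.of_support_subset_isCompact (isCompact_setOf_snorm2_le 1) hφsupp)) hε.ne' hq ℓ
end

section
/- Suppose for every δ > 0, every M_0 > 0, and every χ ∈ C_c^K(R^2) there exists M ≥ M_0 with |(χ F_M)-hat(ξ) − χ-hat(ξ)| ≤ δ g(ξ) for all ξ ∈ R^2, where g is a fixed bounded positive function with g(0) = 1. Then, starting from a non-negative χ_0 ∈ C_c^K(R^2) with integral 1 supported in a closed ball B, there exists a nonzero finite Borel measure μ supported in B ∩ ⋂_k supp(F_{M_k}) for some sequence M_k with M_k ≤ M_{k+1}/2, satisfying |μ-hat(ξ)| ≤ C g(ξ) for all ξ and |μ-hat(0)| ≥ 1/2. -/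
open MeasureTheory Complex GaussianInt

/-!
Choose the scales one after another, so that multiplying the current density by `F (M k)` moves its
Fourier transform by at most `2⁻ᵏ⁻² * g`. The densities `χ₀ * F (M 0) * ⋯ * F (M (k - 1))` then have
Fourier transforms within `g / 2` of that of `χ₀`, hence bounded mass, and all live on the compact
set `B`. By Prokhorov's theorem the corresponding measures have a weak cluster point `μ`, and both
the Fourier estimate and the vanishing off each `supp (F (M k))` are weakly closed conditions. At
frequency `0` the transform of `χ₀` is `1`, so `μ` has mass at least `1 / 2`.
-/

open Filter Function FourierTransform
open scoped NNReal

theorem norm_sub_le_of_le_geometric_two {E : Type*} [SeminormedAddCommGroup E] {u : ℕ → E} {c : ℝ}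
    (hu : ∀ k, ‖u (k + 1) - u k‖ ≤ c / 2 / 2 ^ k) (n : ℕ) : ‖u n - u 0‖ ≤ c := by
  have hc : 0 ≤ c := by linarith [(_root_.norm_nonneg _).trans (hu 0)]
  have hsum : dist (u 0) (u n) ≤ ∑ k ∈ Finset.range n, c / 2 / 2 ^ k :=
    dist_le_range_sum_of_dist_le n fun {k} _ ↦ by simpa only [dist_eq_norm'] using hu k
  calc ‖u n - u 0‖ ≤ ∑ k ∈ Finset.range n, c / 2 / 2 ^ k := by rwa [← dist_eq_norm']
    _ = c / 2 * ∑ k ∈ Finset.range n, (1 / 2 : ℝ) ^ k := by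
      simp only [Finset.mul_sum, div_eq_mul_inv, one_mul, inv_pow]
    _ ≤ c / 2 * 2 := by gcongr; exact sum_geometric_two_le n
    _ = c := by ring

theorem exists_seq_mul_prod {A : Type*} [CommMonoid A] {F : ℝ → A} {s : Set A}
    {r : ℕ → A → A → Prop} (hs : ∀ a ∈ s, ∀ M, a * F M ∈ s)
    (hr : ∀ k, ∀ M₀ > 0, ∀ a ∈ s, ∃ M ≥ M₀, r k a (a * F M)) {a₀ : A} (ha₀ : a₀ ∈ s) :
    ∃ M : ℕ → ℝ, (∀ k, M k ≤ M (k + 1) / 2) ∧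
      ∀ k, a₀ * ∏ i ∈ Finset.range k, F (M i) ∈ s ∧
        r k (a₀ * ∏ i ∈ Finset.range k, F (M i)) (a₀ * ∏ i ∈ Finset.range (k + 1), F (M i)) := by
  -- A state is the current product together with the last scale used.
  have hstep : ∀ k (p : s × Set.Ioi (0 : ℝ)), ∃ q : s × Set.Ioi (0 : ℝ),
      2 * (p.2 : ℝ) ≤ q.2 ∧ (q.1 : A) = p.1 * F q.2 ∧ r k p.1 q.1 := by
    rintro k ⟨⟨a, ha⟩, ⟨m, hm : 0 < m⟩⟩
    obtain ⟨M, hM, hrM⟩ := hr k (2 * m) (by positivity) a ha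
    exact ⟨(⟨a * F M, hs a ha M⟩, ⟨M, by rw [Set.mem_Ioi]; linarith⟩), hM, rfl, hrM⟩
  choose next hnext_le hnext_eq hnext_rel using hstep
  let p : ℕ → s × Set.Ioi (0 : ℝ) := fun k ↦ k.rec (⟨a₀, ha₀⟩, ⟨1, Set.mem_Ioi.2 one_pos⟩) next
  have hp : ∀ k, ((p k).1 : A) = a₀ * ∏ i ∈ Finset.range k, F (p (i + 1)).2 := by
    intro k
    induction k with
    | zero => simp [p]
    | succ k ih => rw [Finset.prod_range_succ, ← mul_assoc, ← ih]; exact hnext_eq k (p k)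
  refine ⟨fun k ↦ (p (k + 1)).2, fun k ↦ ?_, fun k ↦ ?_⟩
  · linarith [hnext_le (k + 1) (p (k + 1))]
  · rw [← hp, ← hp]
    exact ⟨(p k).1.2, hnext_rel k (p k)⟩

theorem support_mul_prod_subset {ι X R : Type*} [CommMonoidWithZero R] (χ : X → R) (f : ι → X → R)
    {s : Finset ι} {i : ι} (hi : i ∈ s) : support (χ * ∏ j ∈ s, f j) ⊆ support (f i) := by
  refine support_subset_iff'.2 fun x hx ↦ ?_
  rw [Pi.mul_apply, Finset.prod_apply, Finset.prod_eq_zero hi (notMem_support.1 hx), mul_zero]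

theorem exists_mapClusterPt_compl_inter_iInter_eq_zero {E ι κ : Type*} [TopologicalSpace E]
    [T2Space E] [HasOuterApproxClosed E] [MeasurableSpace E] [BorelSpace E] [Countable ι]
    {l : Filter κ} [l.NeBot] {m : κ → FiniteMeasure E} {c : ℝ≥0} (hmass : ∀ k, (m k).mass ≤ c)
    {B : Set E} (hB : IsCompact B) (hmB : ∀ k, (m k : Measure E) Bᶜ = 0) {A : ι → Set E}
    (hA : ∀ i, IsClosed (A i)) (hmA : ∀ i, ∀ᶠ k in l, (m k : Measure E) (A i)ᶜ = 0) :
    ∃ μ : FiniteMeasure E, MapClusterPt μ l m ∧ (μ : Measure E) (B ∩ ⋂ i, A i)ᶜ = 0 := by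
  have hcompact {T : Set E} (hT : IsCompact T) :
      IsCompact {ν : FiniteMeasure E | ν.mass ≤ c ∧ (ν : Measure E) Tᶜ = 0} := by
    simpa only [FiniteMeasure.null_iff_toMeasure_null] using
      isCompact_setOfPred_finiteMeasure_le_of_isCompact c hT
  obtain ⟨μ, ⟨-, hμB⟩, hμ⟩ := (hcompact hB).exists_mapClusterPt (f := l)
    (tendsto_principal.2 (.of_forall fun k ↦ ⟨hmass k, hmB k⟩))
  have hμA : ∀ i, (μ : Measure E) (B ∩ A i)ᶜ = 0 := fun i ↦ by
    refine ((hcompact (hB.inter_right (hA i))).isClosed.mem_of_mapClusterPt hμ ?_).2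
    filter_upwards [hmA i] with k hk
    exact ⟨hmass k, by rw [Set.compl_inter]; exact measure_union_null (hmB k) hk⟩
  rw [Set.compl_inter, Set.compl_iInter]
  exact ⟨μ, hμ, measure_union_null hμB (measure_iUnion_null fun i ↦
    measure_mono_null (Set.compl_subset_compl.2 Set.inter_subset_right) (hμA i))⟩

theorem continuous_charFun_finiteMeasure {E : Type*} [SeminormedAddCommGroup E]
    [InnerProductSpace ℝ E] [MeasurableSpace E] [OpensMeasurableSpace E] (t : E) :
    Continuous fun μ : FiniteMeasure E ↦ charFun (μ : Measure E) t := by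
  simp only [charFun_eq_integral_innerProbChar]
  exact continuous_iff_continuousAt.2 fun μ ↦
    (FiniteMeasure.tendsto_iff_forall_integral_rclike_tendsto ℂ).1 tendsto_id _

theorem withDensity_ofReal_compl_eq_zero {X : Type*} [MeasurableSpace X] {ν : Measure X}
    {χ : X → ℝ} (hχ : AEMeasurable χ ν) {A : Set X} (hA : support χ ⊆ A) :
    ν.withDensity (fun x ↦ ENNReal.ofReal (χ x)) Aᶜ = 0 := by
  have hdisj : Disjoint {x | ENNReal.ofReal (χ x) ≠ 0} Aᶜ :=
    Set.disjoint_compl_right_iff_subset.2 fun x hx ↦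
      hA fun h0 ↦ hx (by rw [h0, ENNReal.ofReal_zero])
  rw [withDensity_apply_eq_zero' hχ.ennreal_ofReal, hdisj.inter_eq, measure_empty]

section Fourier

variable {V : Type*} [NormedAddCommGroup V] [InnerProductSpace ℝ V] [MeasurableSpace V]
  [BorelSpace V] [FiniteDimensional ℝ V]

theorem charFun_withDensity_ofReal {χ : V → ℝ} (hχ : AEMeasurable χ) (hχpos : 0 ≤ χ) (ξ : V) :
    charFun (volume.withDensity fun x ↦ ENNReal.ofReal (χ x)) (-(2 * Real.pi) • ξ) =
      𝓕 (fun x ↦ (χ x : ℂ)) ξ := by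
  rw [charFun_apply, Real.fourier_eq', integral_withDensity_eq_integral_toReal_smul₀
    hχ.ennreal_ofReal (.of_forall fun _ ↦ ENNReal.ofReal_lt_top)]
  congr with x
  rw [ENNReal.toReal_ofReal (hχpos x), Complex.real_smul, mul_comm, smul_eq_mul, inner_smul_right,
    neg_mul, neg_mul, neg_mul]

theorem fourier_zero_eq_integral (f : V → ℂ) : 𝓕 f 0 = ∫ x, f x := by
  simp [Real.fourier_eq]

theorem exists_measure_norm_charFun_sub_le {ι κ : Type*} [Countable ι] {l : Filter κ} [l.NeBot]
    {χ : κ → V → ℝ} (hχint : ∀ k, Integrable (χ k)) (hχpos : ∀ k, 0 ≤ χ k) {B : Set V}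
    (hB : IsCompact B) (hχB : ∀ k, support (χ k) ⊆ B) {A : ι → Set V} (hA : ∀ i, IsClosed (A i))
    (hχA : ∀ i, ∀ᶠ k in l, support (χ k) ⊆ A i) {f : V → ℂ} {r : V → ℝ}
    (hf : ∀ k ξ, ‖𝓕 (fun x ↦ (χ k x : ℂ)) ξ - f ξ‖ ≤ r ξ) :
    ∃ μ : Measure V, IsFiniteMeasure μ ∧ μ (B ∩ ⋂ i, A i)ᶜ = 0 ∧
      ∀ ξ, ‖charFun μ (-(2 * Real.pi) • ξ) - f ξ‖ ≤ r ξ := by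
  let m : κ → FiniteMeasure V := fun k ↦
    ⟨_, isFiniteMeasure_withDensity_ofReal (hχint k).hasFiniteIntegral⟩
  have hm : ∀ k ξ, charFun (m k : Measure V) (-(2 * Real.pi) • ξ) = 𝓕 (fun x ↦ (χ k x : ℂ)) ξ :=
    fun k ↦ charFun_withDensity_ofReal (hχint k).aemeasurable (hχpos k)
  have hnull : ∀ k {S : Set V}, support (χ k) ⊆ S → (m k : Measure V) Sᶜ = 0 := fun k S ↦
    withDensity_ofReal_compl_eq_zero (hχint k).aemeasurable
  have hmass : ∀ k, (m k).mass ≤ (‖f 0‖ + r 0).toNNReal := fun k ↦ by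
    have hk : ‖charFun (m k : Measure V) 0‖ ≤ ‖f 0‖ + r 0 := by
      have hm0 := by simpa only [smul_zero] using hm k 0
      rw [hm0]
      exact (norm_le_norm_add_norm_sub' _ _).trans (by gcongr; exact hf k 0)
    rw [charFun_zero, Complex.norm_real] at hk
    exact NNReal.le_toNNReal_of_coe_le ((le_abs_self _).trans hk)
  obtain ⟨μ, hμ, hμnull⟩ := exists_mapClusterPt_compl_inter_iInter_eq_zero hmass hB
    (fun k ↦ hnull k (hχB k)) hA fun i ↦ (hχA i).mono fun k ↦ hnull k
  refine ⟨μ, inferInstance, hμnull, fun ξ ↦ ?_⟩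
  have hclosed : IsClosed {ν : FiniteMeasure V |
      ‖charFun (ν : Measure V) (-(2 * Real.pi) • ξ) - f ξ‖ ≤ r ξ} :=
    isClosed_le ((continuous_charFun_finiteMeasure _).sub continuous_const).norm continuous_const
  exact hclosed.mem_of_mapClusterPt hμ
    (.of_forall fun k ↦ by simpa only [Set.mem_ofPred_eq, hm] using hf k ξ)

/-- Multiplication by suitable `F M` with `M` arbitrarily large changes the Fourier transform of any
given `Cⁿ` compactly supported function by an arbitrarily small multiple of the weight `g`. This is
the property of the family `F` that drives the choice of the scales. -/
def ApproxPreservesFourier (n : WithTop ℕ∞) (F : ℝ → V → ℝ) (g : V → ℝ) : Prop :=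
  ∀ δ > (0 : ℝ), ∀ M₀ > (0 : ℝ), ∀ χ : V → ℝ, ContDiff ℝ n χ → HasCompactSupport χ →
    ∃ M ≥ M₀, ∀ ξ : V,
      ‖𝓕 (fun x ↦ ((χ x * F M x : ℝ) : ℂ)) ξ - 𝓕 (fun x ↦ (χ x : ℂ)) ξ‖ ≤ δ * g ξ

section Products

variable {n : WithTop ℕ∞} {F : ℝ → V → ℝ} {g : V → ℝ} {B : Set V} {χ₀ : V → ℝ}

theorem exists_seq_norm_fourier_mul_prod_sub_le
    (hFpos : ∀ M x, 0 ≤ F M x) (hFsm : ∀ M, ContDiff ℝ n (F M))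
    (hrec : ApproxPreservesFourier n F g)
    (hχ₀sm : ContDiff ℝ n χ₀) (hχ₀c : HasCompactSupport χ₀) (hχ₀pos : ∀ x, 0 ≤ χ₀ x)
    {ε : ℝ} (hε : 0 < ε) :
    ∃ M : ℕ → ℝ, (∀ k, M k ≤ M (k + 1) / 2) ∧ ∀ k,
      Integrable (χ₀ * ∏ i ∈ Finset.range k, F (M i)) ∧ 0 ≤ χ₀ * ∏ i ∈ Finset.range k, F (M i) ∧
        ∀ ξ, ‖𝓕 (fun x ↦ (((χ₀ * ∏ i ∈ Finset.range k, F (M i)) x : ℝ) : ℂ)) ξ -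
          𝓕 (fun x ↦ (χ₀ x : ℂ)) ξ‖ ≤ ε * g ξ := by
  let s : Set (V → ℝ) := {χ | ContDiff ℝ n χ ∧ HasCompactSupport χ ∧ 0 ≤ χ}
  have hs : ∀ χ ∈ s, ∀ M, χ * F M ∈ s := fun χ ⟨hsm, hc, hpos⟩ M ↦
    ⟨hsm.mul (hFsm M), hc.mul_right, mul_nonneg hpos (hFpos M)⟩
  obtain ⟨M, hM, hχ⟩ := exists_seq_mul_prod (r := fun k (χ χ' : V → ℝ) ↦ ∀ ξ : V,
      ‖𝓕 (fun x ↦ (χ' x : ℂ)) ξ - 𝓕 (fun x ↦ (χ x : ℂ)) ξ‖ ≤ ε / 2 / 2 ^ k * g ξ) hs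
    (fun k M₀ hM₀ χ hχ ↦ hrec _ (by positivity) M₀ hM₀ χ hχ.1 hχ.2.1) ⟨hχ₀sm, hχ₀c, hχ₀pos⟩
  refine ⟨M, hM, fun k ↦ ?_⟩
  obtain ⟨⟨hsm, hc, hpos⟩, -⟩ := hχ k
  refine ⟨hsm.continuous.integrable_of_hasCompactSupport hc, hpos, fun ξ ↦ ?_⟩
  simpa using norm_sub_le_of_le_geometric_two
    (u := fun k ↦ 𝓕 (fun x ↦ (((χ₀ * ∏ i ∈ Finset.range k, F (M i)) x : ℝ) : ℂ)) ξ)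
    (fun k ↦ ((hχ k).2 ξ).trans_eq (by ring)) k

theorem exists_measure_norm_charFun_sub_fourier_le
    (hFpos : ∀ M x, 0 ≤ F M x) (hFsm : ∀ M, ContDiff ℝ n (F M))
    (hrec : ApproxPreservesFourier n F g)
    (hB : IsCompact B) (hχ₀sm : ContDiff ℝ n χ₀) (hχ₀pos : ∀ x, 0 ≤ χ₀ x)
    (hχ₀supp : support χ₀ ⊆ B) {ε : ℝ} (hε : 0 < ε) :
    ∃ M : ℕ → ℝ, (∀ k, M k ≤ M (k + 1) / 2) ∧
      ∃ μ : Measure V, IsFiniteMeasure μ ∧ μ (B ∩ ⋂ k, tsupport (F (M k)))ᶜ = 0 ∧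
        ∀ ξ, ‖charFun μ (-(2 * Real.pi) • ξ) - 𝓕 (fun x ↦ (χ₀ x : ℂ)) ξ‖ ≤ ε * g ξ := by
  obtain ⟨M, hM, hχ⟩ := exists_seq_norm_fourier_mul_prod_sub_le hFpos hFsm hrec hχ₀sm
    (.of_support_subset_isCompact hB hχ₀supp) hχ₀pos hε
  refine ⟨M, hM, exists_measure_norm_charFun_sub_le (l := atTop)
    (fun k ↦ (hχ k).1) (fun k ↦ (hχ k).2.1) hB
    (fun k ↦ (support_mul_subset_left _ _).trans hχ₀supp) (fun k ↦ isClosed_tsupport _)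
    (fun k ↦ ?_) fun k ↦ (hχ k).2.2⟩
  filter_upwards [eventually_gt_atTop k] with j hj
  exact (support_mul_prod_subset χ₀ (F ∘ M) (Finset.mem_range.2 hj)).trans (subset_tsupport _)

theorem stmt18_general
    (hFpos : ∀ M x, 0 ≤ F M x) (hFsm : ∀ M, ContDiff ℝ n (F M)) (hg0 : g 0 = 1)
    (hrec : ApproxPreservesFourier n F g)
    (hB : IsCompact B) (hχ₀sm : ContDiff ℝ n χ₀) (hχ₀pos : ∀ x, 0 ≤ χ₀ x)
    (hχ₀supp : support χ₀ ⊆ B) (hχ₀int : ∫ x, χ₀ x = 1)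
    (hχ₀g : ∃ C : ℝ, ∀ ξ, ‖𝓕 (fun x ↦ (χ₀ x : ℂ)) ξ‖ ≤ C * g ξ) :
    ∃ M : ℕ → ℝ, (∀ k, M k ≤ M (k + 1) / 2) ∧
      ∃ μ : Measure V, IsFiniteMeasure μ ∧ μ ≠ 0 ∧ μ (B ∩ ⋂ k, tsupport (F (M k)))ᶜ = 0 ∧
        (∃ C : ℝ, ∀ ξ, ‖charFun μ (-(2 * Real.pi) • ξ)‖ ≤ C * g ξ) ∧ 1 / 2 ≤ ‖charFun μ 0‖ := by
  obtain ⟨C, hC⟩ := hχ₀g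
  obtain ⟨M, hM, μ, hμfin, hμnull, hμ⟩ := exists_measure_norm_charFun_sub_fourier_le
    hFpos hFsm hrec hB hχ₀sm hχ₀pos hχ₀supp one_half_pos
  have hzero : 1 / 2 ≤ ‖charFun μ 0‖ := by
    have hμ0 : ‖charFun μ 0 - 1‖ ≤ 1 / 2 := by
      simpa [fourier_zero_eq_integral, integral_complex_ofReal, hχ₀int, hg0] using hμ 0
    have := norm_sub_norm_le 1 (charFun μ 0)
    rw [norm_sub_rev, norm_one] at this
    linarith
  refine ⟨M, hM, μ, hμfin, ?_, hμnull, ⟨C + 1 / 2, fun ξ ↦ ?_⟩, hzero⟩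
  · rintro rfl
    norm_num at hzero
  · calc ‖charFun μ (-(2 * Real.pi) • ξ)‖
        ≤ ‖𝓕 (fun x ↦ (χ₀ x : ℂ)) ξ‖ +
            ‖charFun μ (-(2 * Real.pi) • ξ) - 𝓕 (fun x ↦ (χ₀ x : ℂ)) ξ‖ :=
          norm_le_norm_add_norm_sub' _ _
      _ ≤ C * g ξ + 1 / 2 * g ξ := add_le_add (hC ξ) (hμ ξ)
      _ = (C + 1 / 2) * g ξ := by ring

end Products

end Fourier

theorem inn_eq_inner (ξ x : ℂ) : inn ξ x = inner ℝ x ξ := by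
  simp [inn, Complex.inner]

theorem ftr_eq_fourier (f : ℂ → ℂ) : ftr f = 𝓕 f := by
  ext ξ
  rw [ftr, Real.fourier_eq']
  congr with x
  rw [ec, inn_eq_inner, smul_eq_mul]
  push_cast
  ring_nf

theorem mhat_eq_charFun (μ : Measure ℂ) (ξ : ℂ) : mhat μ ξ = charFun μ (-(2 * Real.pi) • ξ) := by
  rw [mhat, charFun_apply]
  congr with x
  rw [ec, inn_eq_inner, inner_smul_right]
  push_cast
  ring_nf

theorem stmt18 (K : ℕ) (F : ℝ → ℂ → ℝ)
    (hFpos : ∀ M x, 0 ≤ F M x)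
    (hFper : ∀ (M : ℝ) (x : ℂ) (m : GaussianInt), F M (x + toComplex m) = F M x)
    (hFsm : ∀ M, ContDiff ℝ K (F M))
    (g : ℂ → ℝ) (hgpos : ∀ ξ, 0 < g ξ) (hgbdd : ∃ Cg : ℝ, ∀ ξ, g ξ ≤ Cg) (hg0 : g 0 = 1)
    (hrec : ∀ δ > (0 : ℝ), ∀ M₀ > (0 : ℝ), ∀ χ : ℂ → ℝ,
      ContDiff ℝ K χ → HasCompactSupport χ →
      ∃ M ≥ M₀, ∀ ξ : ℂ,
        ‖ftr (fun x => ((χ x * F M x : ℝ) : ℂ)) ξ - ftr (fun x => (χ x : ℂ)) ξ‖ ≤ δ * g ξ)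
    (B : Set ℂ) (x₀ : ℂ) (ρ : ℝ) (hB : B = Metric.closedBall x₀ ρ)
    (χ₀ : ℂ → ℝ) (hχ₀sm : ContDiff ℝ K χ₀) (hχ₀c : HasCompactSupport χ₀)
    (hχ₀pos : ∀ x, 0 ≤ χ₀ x) (hχ₀supp : Function.support χ₀ ⊆ B)
    (hχ₀int : ∫ x : ℂ, χ₀ x = 1)
    (hχ₀g : ∃ C : ℝ, ∀ ξ, ‖ftr (fun x => (χ₀ x : ℂ)) ξ‖ ≤ C * g ξ) :
    ∃ M : ℕ → ℝ, (∀ k, M k ≤ M (k + 1) / 2) ∧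
      ∃ μ : Measure ℂ, IsFiniteMeasure μ ∧ μ ≠ 0 ∧
        μ (B ∩ ⋂ k, closure (Function.support (F (M k))))ᶜ = 0 ∧
        (∃ C : ℝ, ∀ ξ, ‖mhat μ ξ‖ ≤ C * g ξ) ∧ 1 / 2 ≤ ‖mhat μ 0‖ := by
  simpa only [tsupport, mhat_eq_charFun, smul_zero] using stmt18_general hFpos hFsm hg0
    (by simpa only [ApproxPreservesFourier, ftr_eq_fourier] using hrec)
    (hB ▸ isCompact_closedBall x₀ ρ) hχ₀sm hχ₀pos hχ₀supp hχ₀int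
    (by simpa only [ftr_eq_fourier] using hχ₀g)
end
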